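/- Let 𝓘, 𝓖 be collections of subsets of ℕ such that 𝓘 is countable and downwards ≤_e-closed, and 𝓖 is countable, disjoint from 𝓘, and closed under ≡_e. Then there exist countable collections 𝓘_f ⊇ 𝓘 and 𝓖_f ⊇ 𝓖 such that 𝓘_f is downwards ≤_e-closed, 𝓖_f is closed under ≡_e and disjoint from 𝓘_f, and 𝓘_f is a splitting class: for every A ∈ 𝓘_f and every finite 𝓑 ⊆ 𝓘_f with B ≰_e A for all B ∈ 𝓑, there is C ∈ 𝓘_f with A ≤_e C, C ≰_e A, and B ⊕ C ∉ 𝓘_f for all B ∈ 𝓑. In particular, splitting classes of enumeration degrees exist. -/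

import Mathlib

/-!
The class is built as the union of an increasing `ω`-sequence of countable pairs `(𝓘, 𝓖)`, where
`𝓘` is downwards closed, `𝓖` is closed under `≡ₑ`, and the members of `𝓖` are kept out of `𝓘`
forever (`GoodPair`). Given `A ∈ 𝓘` and a finite `𝓑 ⊆ 𝓘` with no member below `A`, one takes a
suitable `C ≥ₑ A`, adds to `𝓘` all sets `≤ₑ C`, and adds to `𝓖` all sets `≡ₑ B ⊕ C` with `B ∈ 𝓑`
(`GoodPair.exists_solves`). The pair stays disjoint as soon as `C ∉ 𝓘` and no set in `𝓖 ∪ 𝓑` is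
`≤ₑ C`. No set in `𝓖 ∪ 𝓑` is `≤ₑ A`: for `𝓑` this is the hypothesis, and for `𝓖` it follows from
`A ∈ 𝓘` and disjointness. So it is enough to have, for countably many sets `H ≰ₑ A`, some `C ≥ₑ A`
outside a given countable class with every `H ≰ₑ C` (`exists_generic_above`).

Such a `C` is `A ⊕ g` with `g` generic, obtained from the Baire category theorem in Cantor space.
To force `H ≠ Φ(A ⊕ g)` beyond a finite string `σ`, compare `H` with `Φ(A ⊕ M)`, where `M` is the
largest set extending `σ` (`force_ne`). As `M` is cofinite, `Φ(A ⊕ M) ≤ₑ A`, so the two sets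
differ; since enumeration operators are monotone and continuous, the difference is settled by a
finite extension of `σ`.

A round of the construction meets all requirements posed by one class
(`GoodPair.exists_solves_all`), and `ω` rounds meet all those posed by the union, because each
requirement mentions only finitely many sets. The computability facts needed are the
transitivity of `≤ₑ` (`EnumRed.trans`) and the countability of the class of c.e. sets.
-/

def Dset (u : ℕ) : Set ℕ := {i | Nat.testBit u i}

def enumOp (W A : Set ℕ) : Set ℕ := {x | ∃ u, Nat.pair x u ∈ W ∧ Dset u ⊆ A}

def CE (W : Set ℕ) : Prop := ∃ f : ℕ →. ℕ, Partrec f ∧ W = f.Dom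

def EnumRed (A B : Set ℕ) : Prop := ∃ W, CE W ∧ A = enumOp W B

def EnumEq (A B : Set ℕ) : Prop := EnumRed A B ∧ EnumRed B A

def WeStd (e : ℕ) : Set ℕ := {x | ((Denumerable.ofNat Nat.Partrec.Code e).eval x).Dom}

def PhiStd (e : ℕ) : Set ℕ → Set ℕ := enumOp (WeStd e)

def pgraph (φ : ℕ →. ℕ) : Set ℕ := {n | n.unpair.2 ∈ φ n.unpair.1}

def peRed (φ ψ : ℕ →. ℕ) : Prop := EnumRed (pgraph φ) (pgraph ψ)

def pfAdd (φ ψ : ℕ →. ℕ) : ℕ →. ℕ := fun n => if n % 2 = 0 then φ (n / 2) else ψ (n / 2)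

def pfCons (i : ℕ) (φ : ℕ →. ℕ) : ℕ →. ℕ := fun n => if n = 0 then Part.some i else φ (n - 1)

abbrev MassPb := Set (ℕ →. ℕ)

def mpPlus (A B : MassPb) : MassPb := {h | ∃ φ ∈ A, ∃ ψ ∈ B, h = pfAdd φ ψ}

def mpCons (i : ℕ) (A : MassPb) : MassPb := pfCons i '' A

def mpWedge (A B : MassPb) : MassPb := mpCons 0 A ∪ mpCons 1 B

def mpArrow (A B : MassPb) : MassPb :=
  {h | ∃ e φ, h = pfCons e φ ∧ ∀ ψ ∈ A, ∃ χ ∈ B, pgraph χ = PhiStd e (pgraph (pfAdd φ ψ))}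

def DRed (A B : MassPb) : Prop :=
  ∃ W, CE W ∧ ∀ ψ ∈ B, ∃ χ ∈ A, pgraph χ = enumOp W (pgraph ψ)

def DEq (A B : MassPb) : Prop := DRed A B ∧ DRed B A

def DwRed (A B : MassPb) : Prop := ∀ ψ ∈ B, ∃ φ ∈ A, peRed φ ψ

def DwEq (A B : MassPb) : Prop := DwRed A B ∧ DwRed B A

def UpClosedE (A : MassPb) : Prop := ∀ φ ψ, φ ∈ A → peRed φ ψ → ψ ∈ A

def DMProblem (A : MassPb) : Prop := A.Nonempty ∧ UpClosedE A

def PartCompFn (φ : ℕ →. ℕ) : Prop := CE (pgraph φ)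

def oplus (A B : Set ℕ) : Set ℕ := (fun x => 2*x) '' A ∪ (fun x => 2*x+1) '' B

/-- A collection of subsets of `ℕ` is downwards `≤ₑ`-closed. -/
def DownClosedE (I : Set (Set ℕ)) : Prop := ∀ X Y : Set ℕ, EnumRed X Y → Y ∈ I → X ∈ I

/-- A collection of subsets of `ℕ` is closed under `≡ₑ`. -/
def EClosedEq (G : Set (Set ℕ)) : Prop := ∀ X Y : Set ℕ, EnumEq X Y → X ∈ G → Y ∈ G

/-- A splitting class of sets under enumeration reducibility. -/
def SplittingClassE (I : Set (Set ℕ)) : Prop :=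
  I.Countable ∧ DownClosedE I ∧
  ∀ A ∈ I, ∀ Bs : Set (Set ℕ), Bs.Finite → Bs ⊆ I → (∀ B ∈ Bs, ¬ EnumRed B A) →
    ∃ C ∈ I, EnumRed A C ∧ ¬ EnumRed C A ∧ ∀ B ∈ Bs, oplus B C ∉ I

/-! ### Enumeration reducibility -/

theorem primrecRel_exists_lt {β : Type*} [Primcodable β] {R : ℕ → β → Prop} (hR : PrimrecRel R) :
    PrimrecRel fun (n : ℕ) (b : β) => ∃ x < n, R x b :=
  (hR.exists_mem_list.comp (Primrec.list_range.comp Primrec.fst) Primrec.snd).of_eq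
    fun _ => by simp

theorem primrecRel_forall_lt {β : Type*} [Primcodable β] {R : ℕ → β → Prop} (hR : PrimrecRel R) :
    PrimrecRel fun (n : ℕ) (b : β) => ∀ x < n, R x b :=
  (hR.forall_mem_list.comp (Primrec.list_range.comp Primrec.fst) Primrec.snd).of_eq
    fun _ => by simp

theorem primrec_two_pow : Primrec fun n : ℕ => 2 ^ n := by
  have h : Primrec fun n : ℕ => Nat.rec (motive := fun _ => ℕ) 1 (fun _ m => 2 * m) n :=
    Primrec.nat_rec₁ 1 (Primrec.nat_mul.comp (Primrec.const 2) Primrec.snd)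
  refine h.of_eq fun n => ?_
  induction n with
  | zero => rfl
  | succ n ih => rw [pow_succ, mul_comm, ← ih]

theorem primrecRel_testBit : PrimrecRel fun v i : ℕ => Nat.testBit v i = true := by
  have h : PrimrecRel fun v i : ℕ => v / 2 ^ i % 2 = 1 :=
    Primrec.eq.comp (Primrec.nat_mod.comp
      (Primrec.nat_div.comp Primrec.fst (primrec_two_pow.comp Primrec.snd))
      (Primrec.const 2)) (Primrec.const 1)
  exact h.of_eq fun v i => by simp [Nat.testBit_eq_decide_div_mod_eq]

/-- The projection of a primitive recursive relation along its second coordinate is c.e. -/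
theorem CE.of_exists {R : ℕ → ℕ → Prop} (hR : PrimrecRel R) : CE {x | ∃ k, R x k} := by
  classical
  refine ⟨fun x => Nat.rfind fun k => Part.some (decide (R x k)), ?_, ?_⟩
  · exact Partrec.rfind (p := fun x k => Part.some (decide (R x k)))
      (Computable₂.partrec₂ hR.decide.to_comp)
  · ext x
    refine Iff.trans ?_ Nat.rfind_dom.symm
    simp

theorem CE.of_primrecPred {p : ℕ → Prop} (hp : PrimrecPred p) : CE {x | p x} := by
  have h := CE.of_exists (R := fun x _ => p x) (hp.comp Primrec.fst)
  simpa using h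

/-- Every c.e. set is the union of an increasing, uniformly primitive recursive sequence of
stages. -/
theorem CE.exists_stages {W : Set ℕ} (hW : CE W) :
    ∃ R : ℕ → ℕ → Prop, PrimrecRel R ∧ (∀ x, x ∈ W ↔ ∃ k, R x k) ∧
      ∀ x k l, k ≤ l → R x k → R x l := by
  obtain ⟨f, hf, rfl⟩ := hW
  obtain ⟨c, rfl⟩ := Nat.Partrec.Code.exists_code.1 (Partrec.nat_iff.1 hf)
  refine ⟨fun x k => (Nat.Partrec.Code.evaln k c x).isSome = true, ?_, ?_, ?_⟩
  · exact Primrec.eq.comp (Primrec.option_isSome.comp (Nat.Partrec.Code.primrec_evaln.comp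
      ((Primrec.snd.pair (Primrec.const c)).pair Primrec.fst))) (Primrec.const true)
  · intro x
    simp only [PFun.mem_dom, Nat.Partrec.Code.evaln_complete, Option.isSome_iff_exists]
    exact exists_comm
  · intro x k l hkl h
    obtain ⟨y, hy⟩ := Option.isSome_iff_exists.1 h
    exact Option.isSome_iff_exists.2 ⟨y, Nat.Partrec.Code.evaln_mono hkl hy⟩

theorem lt_of_mem_Dset {u i : ℕ} (h : i ∈ Dset u) : i < u :=
  lt_of_lt_of_le Nat.lt_two_pow_self (Nat.ge_two_pow_of_testBit h)

theorem primrecRel_Dset_subset : PrimrecRel fun v z : ℕ => Dset v ⊆ Dset z := by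
  have h : PrimrecRel fun (i : ℕ) (p : ℕ × ℕ) =>
      ¬ Nat.testBit p.1 i = true ∨ Nat.testBit p.2 i = true :=
    PrimrecPred.or
      (PrimrecPred.not (primrecRel_testBit.comp (Primrec.fst.comp Primrec.snd) Primrec.fst))
      (primrecRel_testBit.comp (Primrec.snd.comp Primrec.snd) Primrec.fst)
  have h' := primrecRel_forall_lt h
  refine PrimrecPred.of_eq (h'.comp Primrec.fst Primrec.id) ?_
  rintro ⟨v, z⟩
  constructor
  · intro H i hi
    exact (H i (lt_of_mem_Dset hi)).resolve_left (fun h => h hi)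
  · intro H i _
    by_cases hi : Nat.testBit v i = true
    · exact Or.inr (H hi)
    · exact Or.inl hi

/-- Every finite set has a canonical index. -/
theorem exists_Dset_eq {S : Set ℕ} (hS : S.Finite) : ∃ u, Dset u = S := by
  classical
  obtain ⟨n, hn⟩ := hS.bddAbove
  refine ⟨Nat.ofBits (n := n + 1) fun i => decide ((i : ℕ) ∈ S), ?_⟩
  ext i
  simp only [Dset, Set.mem_ofPred_eq, Nat.testBit_ofBits]
  constructor
  · intro h
    split at h <;> simp_all
  · intro h
    have : i < n + 1 := Nat.lt_succ_of_le (hn h)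
    simp [this, h]

theorem Dset_finite (u : ℕ) : (Dset u).Finite :=
  (Set.finite_lt_nat u).subset fun _ hi => lt_of_mem_Dset hi

theorem Dset_two_pow (k : ℕ) : Dset (2 ^ k) = {k} := by
  ext i
  simp [Dset, Nat.testBit_two_pow, eq_comm]

theorem Dset_zero : Dset 0 = ∅ := by
  ext i
  simp [Dset]

/-- Composition of enumeration operators: `x` is enumerated from `D_z` when some pair `⟨x, u⟩` in
the outer operator has each `y ∈ D_u` enumerated from `D_z` by the inner one. Bounding all
witnesses by a stage `k` makes this an existential quantifier over a primitive recursive relation. -/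
theorem EnumRed.trans {A B C : Set ℕ} (hAB : EnumRed A B) (hBC : EnumRed B C) : EnumRed A C := by
  obtain ⟨V, hV, rfl⟩ := hAB
  obtain ⟨W, hW, rfl⟩ := hBC
  obtain ⟨P, hP, hPV, hPm⟩ := hV.exists_stages
  obtain ⟨Q, hQ, hQW, hQm⟩ := hW.exists_stages
  -- `y` is enumerated from `D_z` by the inner operator within `k` steps
  let S : ℕ → ℕ → ℕ → Prop := fun y z k => ∃ v < k, Q (Nat.pair y v) k ∧ Dset v ⊆ Dset z
  have hS : PrimrecPred fun q : (ℕ × ℕ) × ℕ => S q.1.1 q.1.2 q.2 := by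
    have h : PrimrecRel fun (v : ℕ) (q : (ℕ × ℕ) × ℕ) =>
        Q (Nat.pair q.1.1 v) q.2 ∧ Dset v ⊆ Dset q.1.2 :=
      PrimrecPred.and
        (hQ.comp (Primrec₂.natPair.comp (Primrec.fst.comp (Primrec.fst.comp Primrec.snd))
          Primrec.fst) (Primrec.snd.comp Primrec.snd))
        (primrecRel_Dset_subset.comp Primrec.fst
          (Primrec.snd.comp (Primrec.fst.comp Primrec.snd)))
    have h' := primrecRel_exists_lt h
    exact h'.comp Primrec.snd Primrec.id
  let T : ℕ → ℕ → ℕ → Prop := fun u z k => ∀ y < u, ¬ Nat.testBit u y = true ∨ S y z k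
  have hT : PrimrecPred fun q : (ℕ × ℕ) × ℕ => T q.1.1 q.1.2 q.2 := by
    have h : PrimrecRel fun (y : ℕ) (q : (ℕ × ℕ) × ℕ) =>
        ¬ Nat.testBit q.1.1 y = true ∨ S y q.1.2 q.2 :=
      PrimrecPred.or
        (PrimrecPred.not (primrecRel_testBit.comp
          (Primrec.fst.comp (Primrec.fst.comp Primrec.snd)) Primrec.fst))
        (hS.comp ((Primrec.fst.pair (Primrec.snd.comp (Primrec.fst.comp Primrec.snd))).pair
          (Primrec.snd.comp Primrec.snd)))
    have h' := primrecRel_forall_lt h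
    exact h'.comp (Primrec.fst.comp Primrec.fst) Primrec.id
  let U : ℕ → ℕ → Prop := fun w k =>
    ∃ u < k, P (Nat.pair w.unpair.1 u) k ∧ T u w.unpair.2 k
  have hU : PrimrecRel U := by
    have h : PrimrecRel fun (u : ℕ) (q : ℕ × ℕ) =>
        P (Nat.pair q.1.unpair.1 u) q.2 ∧ T u q.1.unpair.2 q.2 := by
      have hw : Primrec fun q : ℕ × (ℕ × ℕ) => q.2.1.unpair :=
        Primrec.unpair.comp (Primrec.fst.comp Primrec.snd)
      exact PrimrecPred.and
        (hP.comp (Primrec₂.natPair.comp (Primrec.fst.comp hw) Primrec.fst)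
          (Primrec.snd.comp Primrec.snd))
        (hT.comp ((Primrec.fst.pair (Primrec.snd.comp hw)).pair
          (Primrec.snd.comp Primrec.snd)))
    have h' := primrecRel_exists_lt h
    exact h'.comp Primrec.snd Primrec.id
  refine ⟨_, CE.of_exists hU, ?_⟩
  ext x
  constructor
  · rintro ⟨u, hu, hsub⟩
    obtain ⟨k₀, hk₀⟩ := (hPV _).1 hu
    have hy : ∀ y ∈ Dset u, ∃ v k, Q (Nat.pair y v) k ∧ Dset v ⊆ C := by
      intro y hy
      obtain ⟨v, hv, hvC⟩ := hsub hy
      obtain ⟨k, hk⟩ := (hQW _).1 hv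
      exact ⟨v, k, hk, hvC⟩
    choose! v k hk hvC using hy
    obtain ⟨z, hz⟩ := exists_Dset_eq ((Dset_finite u).biUnion fun y _ => Dset_finite (v y))
    obtain ⟨b, hb⟩ := ((Dset_finite u).image fun y => v y + k y).bddAbove
    refine ⟨z, ⟨u + 1 + k₀ + b, u, by omega, ?_, ?_⟩, ?_⟩
    · rw [Nat.unpair_pair]
      exact hPm _ _ _ (by omega) hk₀
    · intro y _
      by_cases hyu : Nat.testBit u y = true
      · have hle : v y + k y ≤ b := hb ⟨y, hyu, rfl⟩
        refine Or.inr ⟨v y, by omega, hQm _ _ _ (by omega) (hk y hyu), ?_⟩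
        rw [Nat.unpair_pair, hz]
        exact Set.subset_biUnion_of_mem (u := fun y => Dset (v y)) hyu
      · exact Or.inl hyu
    · rw [hz]
      exact Set.iUnion₂_subset hvC
  · rintro ⟨z, ⟨k, u, -, hP', hT'⟩, hz⟩
    rw [Nat.unpair_pair] at hP' hT'
    refine ⟨u, (hPV _).2 ⟨k, hP'⟩, fun y hy => ?_⟩
    obtain ⟨v, -, hv, hvz⟩ := (hT' y (lt_of_mem_Dset hy)).resolve_left (fun h => h hy)
    exact ⟨v, (hQW _).2 ⟨k, hv⟩, hvz.trans hz⟩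

theorem EnumRed.of_preimage {f : ℕ → ℕ} (hf : Primrec f) (B : Set ℕ) : EnumRed (f ⁻¹' B) B := by
  have h : PrimrecPred fun w : ℕ => w.unpair.2 = 2 ^ f w.unpair.1 :=
    Primrec.eq.comp (Primrec.snd.comp Primrec.unpair)
      (primrec_two_pow.comp (hf.comp (Primrec.fst.comp Primrec.unpair)))
  refine ⟨_, CE.of_primrecPred h, ?_⟩
  ext x
  simp [enumOp, Dset_two_pow]

theorem EnumRed.refl (A : Set ℕ) : EnumRed A A := EnumRed.of_preimage Primrec.id A

theorem two_mul_mem_oplus {A B : Set ℕ} {x : ℕ} : 2 * x ∈ oplus A B ↔ x ∈ A := by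
  constructor
  · rintro (⟨y, hy, h⟩ | ⟨y, hy, h⟩)
    · obtain rfl : y = x := by simpa using h
      exact hy
    · simp only at h
      omega
  · exact fun h => Or.inl ⟨x, h, rfl⟩

theorem two_mul_add_one_mem_oplus {A B : Set ℕ} {x : ℕ} : 2 * x + 1 ∈ oplus A B ↔ x ∈ B := by
  constructor
  · rintro (⟨y, hy, h⟩ | ⟨y, hy, h⟩)
    · simp only at h
      omega
    · obtain rfl : y = x := by simpa using h
      exact hy
  · exact fun h => Or.inr ⟨x, h, rfl⟩

theorem enumRed_oplus_left (A B : Set ℕ) : EnumRed A (oplus A B) := by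
  have h := EnumRed.of_preimage (Primrec.nat_mul.comp (Primrec.const 2) Primrec.id) (oplus A B)
  convert h using 1
  ext x
  exact two_mul_mem_oplus.symm

theorem enumRed_oplus_right (A B : Set ℕ) : EnumRed B (oplus A B) := by
  have h := EnumRed.of_preimage
    (Primrec.succ.comp (Primrec.nat_mul.comp (Primrec.const 2) Primrec.id)) (oplus A B)
  convert h using 1
  ext x
  exact two_mul_add_one_mem_oplus.symm

/-- Joining with a cofinite set, which is computable, does not raise the enumeration degree. -/
theorem enumRed_oplus_cofinite (A M : Set ℕ) (hM : Mᶜ.Finite) : EnumRed (oplus A M) A := by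
  obtain ⟨s, hs⟩ := exists_Dset_eq hM
  have hx : Primrec fun w : ℕ => w.unpair.1 := Primrec.fst.comp Primrec.unpair
  have hu : Primrec fun w : ℕ => w.unpair.2 := Primrec.snd.comp Primrec.unpair
  have hx2 : Primrec fun w : ℕ => w.unpair.1 / 2 := Primrec.nat_div.comp hx (Primrec.const 2)
  have hxm : Primrec fun w : ℕ => w.unpair.1 % 2 := Primrec.nat_mod.comp hx (Primrec.const 2)
  have h : PrimrecPred fun w : ℕ =>
      (w.unpair.1 % 2 = 0 ∧ w.unpair.2 = 2 ^ (w.unpair.1 / 2)) ∨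
      (w.unpair.1 % 2 = 1 ∧ w.unpair.2 = 0 ∧ ¬ Nat.testBit s (w.unpair.1 / 2) = true) :=
    PrimrecPred.or
      (PrimrecPred.and (Primrec.eq.comp hxm (Primrec.const 0))
        (Primrec.eq.comp hu (primrec_two_pow.comp hx2)))
      (PrimrecPred.and (Primrec.eq.comp hxm (Primrec.const 1))
        (PrimrecPred.and (Primrec.eq.comp hu (Primrec.const 0))
          (PrimrecPred.not (primrecRel_testBit.comp (Primrec.const s) hx2))))
  refine ⟨_, CE.of_primrecPred h, ?_⟩
  have hmem : ∀ i, (¬ Nat.testBit s i = true) ↔ i ∈ M := by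
    intro i
    have : i ∈ Dset s ↔ i ∉ M := by rw [hs]; rfl
    rw [← not_not (a := i ∈ M), ← this]
    rfl
  ext x
  obtain ⟨y, rfl | rfl⟩ := Nat.even_or_odd' x
  · rw [two_mul_mem_oplus]
    simp [enumOp, Dset_two_pow]
  · rw [two_mul_add_one_mem_oplus, ← hmem]
    have h2 : (2 * y + 1) / 2 = y := by omega
    simp [enumOp, Dset_zero, h2]

theorem countable_setOf_CE : {W : Set ℕ | CE W}.Countable := by
  refine (Set.countable_range fun c : Nat.Partrec.Code => (c.eval).Dom).mono ?_
  rintro _ ⟨f, hf, rfl⟩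
  obtain ⟨c, rfl⟩ := Nat.Partrec.Code.exists_code.1 (Partrec.nat_iff.1 hf)
  exact ⟨c, rfl⟩

theorem countable_setOf_enumRed (B : Set ℕ) : {X | EnumRed X B}.Countable := by
  refine (countable_setOf_CE.image fun W => enumOp W B).mono ?_
  rintro X ⟨W, hW, rfl⟩
  exact ⟨W, hW, rfl⟩

/-! ### Generic extensions -/

open PiNat in
/-- Baire category in Cantor space, stated with finite strings: countably many properties, each of
which can be forced by extending any given finite string, hold simultaneously at some point. -/
theorem exists_generic {ι : Type*} [Countable ι] (S : ι → Set (ℕ → Bool))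
    (hS : ∀ j, ∀ (g : ℕ → Bool) (n : ℕ), ∃ (g' : ℕ → Bool) (m : ℕ),
      (∀ i < n, g' i = g i) ∧ ∀ h : ℕ → Bool, (∀ i < m, h i = g' i) → h ∈ S j) :
    ∃ g, ∀ j, g ∈ S j := by
  have hd : Dense (⋂ j, interior (S j)) := by
    refine dense_iInter_of_isOpen (fun _ => isOpen_interior) fun j => ?_
    rw [(isTopologicalBasis_cylinders fun _ : ℕ => Bool).dense_iff]
    rintro _ ⟨g, n, rfl⟩ -
    obtain ⟨g', m, hg', hm⟩ := hS j g n
    refine ⟨g', mem_cylinder_iff.2 hg', ?_⟩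
    refine mem_interior.2 ⟨cylinder g' m, fun h hh => hm h (mem_cylinder_iff.1 hh),
      isOpen_cylinder _ g' m, self_mem_cylinder g' m⟩
  obtain ⟨g, hg⟩ := hd.nonempty
  exact ⟨g, fun j => interior_subset (Set.mem_iInter.1 hg j)⟩

/-- The forcing step. Let `M` contain everything that the string `g ↾ n` does not exclude. Since `M`
is cofinite, `Φ_W(A ⊕ M) ≤ₑ A`, so it differs from `H` at some `x`. If `x ∈ Φ_W(A ⊕ M)`, finitely
much of `M` suffices to enumerate `x`; if `x ∉ Φ_W(A ⊕ M)`, then by monotonicity no extension of the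
string enumerates `x`. -/
theorem force_ne {A H W : Set ℕ} (hW : CE W) (hH : ¬ EnumRed H A) (g : ℕ → Bool) (n : ℕ) :
    ∃ (g' : ℕ → Bool) (m : ℕ), (∀ i < n, g' i = g i) ∧
      ∀ h : ℕ → Bool, (∀ i < m, h i = g' i) → H ≠ enumOp W (oplus A {i | h i = true}) := by
  let g' : ℕ → Bool := fun i => if i < n then g i else true
  have hg' : ∀ i < n, g' i = g i := fun i hi => if_pos hi
  have hfin : ({i | g' i = true} : Set ℕ)ᶜ.Finite := by
    refine (Set.finite_lt_nat n).subset fun i hi => ?_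
    by_contra hin
    exact hi (if_neg hin)
  have hne : ¬ ∀ x, x ∈ H ↔ x ∈ enumOp W (oplus A {i | g' i = true}) := fun h =>
    hH (EnumRed.trans ⟨W, hW, Set.ext h⟩ (enumRed_oplus_cofinite A _ hfin))
  push Not at hne
  obtain ⟨x, ⟨hxH, hx⟩ | ⟨hxH, u, huW, hu⟩⟩ := hne
  · refine ⟨g', n, hg', fun h hh heq => hx ?_⟩
    rw [heq] at hxH
    obtain ⟨u, huW, hu⟩ := hxH
    refine ⟨u, huW, fun i hi => ?_⟩
    rcases hu hi with ⟨y, hy, rfl⟩ | ⟨y, hy, rfl⟩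
    · exact two_mul_mem_oplus.2 hy
    · refine two_mul_add_one_mem_oplus.2 ?_
      by_cases hyn : y < n
      · exact (hh y hyn).symm.trans hy
      · exact if_neg hyn
  · refine ⟨g', u, hg', fun h hh heq => hxH ?_⟩
    rw [heq]
    refine ⟨u, huW, fun i hi => ?_⟩
    have hlt := lt_of_mem_Dset hi
    rcases hu hi with ⟨y, hy, rfl⟩ | ⟨y, hy, rfl⟩
    · exact two_mul_mem_oplus.2 hy
    · simp only at hlt
      exact two_mul_add_one_mem_oplus.2 ((hh y (by omega)).trans hy)

/-- A set `C ≥ₑ A` outside the countable class `I` that enumerates none of countably many given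
sets not below `A`; it is `A ⊕ g` for a sufficiently generic `g`. -/
theorem exists_generic_above (A : Set ℕ) {I 𝓗 : Set (Set ℕ)} (hI : I.Countable)
    (h𝓗 : 𝓗.Countable) (hA : ∀ H ∈ 𝓗, ¬ EnumRed H A) :
    ∃ C, EnumRed A C ∧ C ∉ I ∧ ∀ H ∈ 𝓗, ¬ EnumRed H C := by
  have := hI.to_subtype
  have := h𝓗.to_subtype
  have := countable_setOf_CE.to_subtype
  obtain ⟨g, hg⟩ := exists_generic (ι := I ⊕ (𝓗 × {W : Set ℕ | CE W}))
    (Sum.elim (fun X => {g | oplus A {i | g i = true} ≠ X})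
      (fun p => {g | (p.1 : Set ℕ) ≠ enumOp p.2 (oplus A {i | g i = true})})) (by
    rintro (⟨X, hX⟩ | ⟨⟨H, hH⟩, ⟨W, hW⟩⟩) g n
    · classical
      -- flip the bit at position `n` against `X`
      refine ⟨Function.update g n (!decide (2 * n + 1 ∈ X)), n + 1,
        fun i hi => Function.update_of_ne hi.ne _ _, fun h hh heq => ?_⟩
      have h1 := hh n (Nat.lt_succ_self n)
      have h2 : 2 * n + 1 ∈ X ↔ h n = true := by
        rw [← show oplus A {i | h i = true} = X from heq]
        exact two_mul_add_one_mem_oplus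
      rw [Function.update_self] at h1
      rw [h1] at h2
      by_cases hn : 2 * n + 1 ∈ X <;> simp [hn] at h2
    · exact force_ne hW (hA H hH) g n)
  refine ⟨_, enumRed_oplus_left A {i | g i = true}, fun hC => ?_, ?_⟩
  · exact hg (Sum.inl ⟨_, hC⟩) rfl
  · rintro H hH ⟨W, hW, heq⟩
    exact hg (Sum.inr (⟨H, hH⟩, ⟨W, hW⟩)) heq

/-! ### Building the splitting class -/

/-- A pair `(𝓘, 𝓖)` of countable disjoint classes, `𝓘` downwards `≤ₑ`-closed and `𝓖` closed under
`≡ₑ`. Members of `𝓖` are promised to stay outside the class under construction. -/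
structure GoodPair (p : Set (Set ℕ) × Set (Set ℕ)) : Prop where
  countable_fst : p.1.Countable
  countable_snd : p.2.Countable
  downClosed : DownClosedE p.1
  eClosed : EClosedEq p.2
  disjoint : ∀ X ∈ p.2, X ∉ p.1

/-- `t = (A, 𝓑)` is an instance of the splitting requirement for the class `I`. -/
def IsTask (I : Set (Set ℕ)) (t : Set ℕ × Set (Set ℕ)) : Prop :=
  t.1 ∈ I ∧ t.2.Finite ∧ t.2 ⊆ I ∧ ∀ B ∈ t.2, ¬ EnumRed B t.1

/-- The pair `q` has a witness `C` for the instance `t = (A, 𝓑)` of the splitting requirement, with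
each `B ⊕ C` in the second component of `q`; this property passes to larger pairs. -/
def Solves (q : Set (Set ℕ) × Set (Set ℕ)) (t : Set ℕ × Set (Set ℕ)) : Prop :=
  ∃ C ∈ q.1, EnumRed t.1 C ∧ ¬ EnumRed C t.1 ∧ ∀ B ∈ t.2, oplus B C ∈ q.2

theorem Solves.mono {p q : Set (Set ℕ) × Set (Set ℕ)} {t : Set ℕ × Set (Set ℕ)}
    (h : Solves p t) (hpq : p ≤ q) : Solves q t := by
  obtain ⟨C, hC, h1, h2, h3⟩ := h
  exact ⟨C, hpq.1 hC, h1, h2, fun B hB => hpq.2 (h3 B hB)⟩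

/-- One instance of the splitting requirement: add to `𝓘` everything below a generic `C ≥ₑ A`, and
to `𝓖` the degrees of the sets `B ⊕ C`. -/
theorem GoodPair.exists_solves {p : Set (Set ℕ) × Set (Set ℕ)} (hp : GoodPair p)
    {t : Set ℕ × Set (Set ℕ)} (ht : IsTask p.1 t) : ∃ q, GoodPair q ∧ p ≤ q ∧ Solves q t := by
  obtain ⟨I, G⟩ := p
  obtain ⟨A, Bs⟩ := t
  obtain ⟨hIc, hGc, hId, hGe, hGI⟩ := hp
  obtain ⟨hA, hfin, -, hBA⟩ := ht
  simp only at hIc hGc hId hGe hGI hA hfin hBA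
  obtain ⟨C, hAC, hCI, hC⟩ := exists_generic_above A hIc (hGc.union hfin.countable) (by
    rintro H (hH | hH) hHA
    · exact hGI H hH (hId H A hHA hA)
    · exact hBA H hH hHA)
  refine ⟨(I ∪ {X | EnumRed X C}, G ∪ {X | ∃ B ∈ Bs, EnumEq X (oplus B C)}),
    ⟨?_, ?_, ?_, ?_, ?_⟩, ⟨Set.subset_union_left, Set.subset_union_left⟩, C, ?_, hAC, ?_, ?_⟩
  · exact hIc.union (countable_setOf_enumRed C)
  · refine hGc.union ((hfin.countable.biUnion fun B _ =>
      countable_setOf_enumRed (oplus B C)).mono ?_)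
    rintro X ⟨B, hB, hX⟩
    exact Set.mem_biUnion hB hX.1
  · rintro X Y hXY (hY | hY)
    · exact Or.inl (hId X Y hXY hY)
    · exact Or.inr (EnumRed.trans hXY hY)
  · rintro X Y hXY (hX | ⟨B, hB, hX⟩)
    · exact Or.inl (hGe X Y hXY hX)
    · exact Or.inr ⟨B, hB, hXY.2.trans hX.1, hX.2.trans hXY.1⟩
  · rintro X (hX | ⟨B, hB, hX⟩) (hXI | hXC)
    · exact hGI X hX hXI
    · exact hC X (Or.inl hX) hXC
    · exact hCI (hId C X ((enumRed_oplus_right B C).trans hX.2) hXI)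
    · exact hC B (Or.inr hB) (((enumRed_oplus_left B C).trans hX.2).trans hXC)
  · exact Or.inr (EnumRed.refl C)
  · exact fun hCA => hCI (hId C A hCA hA)
  · exact fun B hB => Or.inr ⟨B, hB, EnumRed.refl _, EnumRed.refl _⟩

/-- If every good pair has a good extension that is related to it by `R n`, then starting from `p`
there is an increasing sequence of good pairs with successive terms so related, and its union is
again a good pair. -/
theorem GoodPair.exists_limit {p : Set (Set ℕ) × Set (Set ℕ)} (hp : GoodPair p)
    (R : ℕ → Set (Set ℕ) × Set (Set ℕ) → Set (Set ℕ) × Set (Set ℕ) → Prop)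
    (step : ∀ n q, GoodPair q → ∃ r, GoodPair r ∧ q ≤ r ∧ R n q r) :
    ∃ (s : ℕ → Set (Set ℕ) × Set (Set ℕ)) (q : Set (Set ℕ) × Set (Set ℕ)),
      s 0 = p ∧ Monotone s ∧ (∀ n, R n (s n) (s (n + 1))) ∧ GoodPair q ∧ (∀ n, s n ≤ q) ∧
      ∀ X ∈ q.1, ∃ n, X ∈ (s n).1 := by
  choose f hfg hfle hfR using step
  let s : ℕ → {q // GoodPair q} := fun n =>
    Nat.rec ⟨p, hp⟩ (fun n q => ⟨f n q.1 q.2, hfg n q.1 q.2⟩) n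
  have hmono : Monotone fun n => (s n).1 :=
    monotone_nat_of_le_succ fun n => hfle n (s n).1 (s n).2
  refine ⟨fun n => (s n).1, (⋃ n, (s n).1.1, ⋃ n, (s n).1.2), rfl, hmono,
    fun n => hfR n (s n).1 (s n).2, ⟨?_, ?_, ?_, ?_, ?_⟩, ?_, fun X hX => Set.mem_iUnion.1 hX⟩
  · exact Set.countable_iUnion fun n => (s n).2.countable_fst
  · exact Set.countable_iUnion fun n => (s n).2.countable_snd
  · intro X Y hXY hY
    obtain ⟨n, hn⟩ := Set.mem_iUnion.1 hY
    exact Set.mem_iUnion.2 ⟨n, (s n).2.downClosed X Y hXY hn⟩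
  · intro X Y hXY hX
    obtain ⟨n, hn⟩ := Set.mem_iUnion.1 hX
    exact Set.mem_iUnion.2 ⟨n, (s n).2.eClosed X Y hXY hn⟩
  · intro X hXG hXI
    obtain ⟨n, hn⟩ := Set.mem_iUnion.1 hXG
    obtain ⟨m, hm⟩ := Set.mem_iUnion.1 hXI
    exact (s (max n m)).2.disjoint X ((hmono (le_max_left n m)).2 hn)
      ((hmono (le_max_right n m)).1 hm)
  · exact fun n => ⟨Set.subset_iUnion (fun n => (s n).1.1) n,
      Set.subset_iUnion (fun n => (s n).1.2) n⟩

/-- All instances of the splitting requirement posed by `𝓘` are met in one good extension. -/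
theorem GoodPair.exists_solves_all {p : Set (Set ℕ) × Set (Set ℕ)} (hp : GoodPair p) :
    ∃ q, GoodPair q ∧ p ≤ q ∧ ∀ t, IsTask p.1 t → Solves q t := by
  have hT : {t | IsTask p.1 t}.Countable :=
    Set.Countable.mono (s₂ := p.1 ×ˢ {Bs | Bs.Finite ∧ Bs ⊆ p.1})
      (fun t (ht : IsTask p.1 t) => ⟨ht.1, ht.2.1, ht.2.2.1⟩)
      (hp.countable_fst.prod (Set.countable_ofPred_finite_subset hp.countable_fst))
  obtain ⟨e, he⟩ := Set.countable_iff_exists_subset_range.1 hT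
  obtain ⟨s, q, hs0, hmono, hR, hq, hsq, -⟩ := hp.exists_limit
    (fun n a b => IsTask a.1 (e n) → Solves b (e n)) (by
      intro n a ha
      by_cases h : IsTask a.1 (e n)
      · obtain ⟨b, hb, hab, hsol⟩ := ha.exists_solves h
        exact ⟨b, hb, hab, fun _ => hsol⟩
      · exact ⟨a, ha, le_rfl, fun h' => absurd h' h⟩)
  refine ⟨q, hq, hs0 ▸ hsq 0, fun t ht => ?_⟩
  obtain ⟨n, rfl⟩ := he ht
  have hle : p ≤ s n := hs0 ▸ hmono (Nat.zero_le n)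
  exact (hR n ⟨hle.1 ht.1, ht.2.1, ht.2.2.1.trans hle.1, ht.2.2.2⟩).mono (hsq (n + 1))

/-- Every pair `(𝓘, 𝓖)` with `𝓘` countable downwards `≤ₑ`-closed and `𝓖`
countable, disjoint from `𝓘` and `≡ₑ`-closed extends to a pair
`(𝓘_f, 𝓖_f)` of the same kind such that `𝓘_f` is a splitting class.
In particular, splitting classes of enumeration degrees exist. -/
theorem exists_splitting_class (I G : Set (Set ℕ))
    (hIc : I.Countable) (hId : DownClosedE I)
    (hGc : G.Countable) (hGI : ∀ X ∈ G, X ∉ I) (hGe : EClosedEq G) :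
    ∃ If Gf : Set (Set ℕ),
      I ⊆ If ∧ G ⊆ Gf ∧ If.Countable ∧ Gf.Countable ∧
      DownClosedE If ∧ EClosedEq Gf ∧ (∀ X ∈ Gf, X ∉ If) ∧
      SplittingClassE If := by
  obtain ⟨s, q, hs0, hmono, hR, hq, hsq, hlim⟩ :=
    GoodPair.exists_limit (p := (I, G)) ⟨hIc, hGc, hId, hGe, hGI⟩
      (fun _ a b => ∀ t, IsTask a.1 t → Solves b t) fun _ _ ha => ha.exists_solves_all
  have hle : (I, G) ≤ q := hs0 ▸ hsq 0
  refine ⟨q.1, q.2, hle.1, hle.2, hq.countable_fst, hq.countable_snd, hq.downClosed, hq.eClosed,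
    hq.disjoint, hq.countable_fst, hq.downClosed, fun A hA Bs hfin hBs hBA => ?_⟩
  -- the finitely many sets involved all appear at some stage `n`
  have hstage : ∃ n, insert A Bs ⊆ (s n).1 := by
    have hX : ∀ X ∈ insert A Bs, ∃ n, X ∈ (s n).1 := by
      rintro X (rfl | hX)
      · exact hlim X hA
      · exact hlim X (hBs hX)
    choose! k hk using hX
    obtain ⟨n, hn⟩ := ((hfin.insert A).image k).bddAbove
    exact ⟨n, fun X hX => (hmono (hn ⟨X, hX, rfl⟩)).1 (hk X hX)⟩
  obtain ⟨n, hn⟩ := hstage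
  obtain ⟨C, hC, hAC, hCA, hBC⟩ := (hR n (A, Bs)
    ⟨hn (Set.mem_insert A Bs), hfin, (Set.subset_insert A Bs).trans hn, hBA⟩).mono (hsq (n + 1))
  exact ⟨C, hC, hAC, hCA, fun B hB => hq.disjoint _ (hBC B hB)⟩
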